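/- arXiv:2112.05064 — 2 statements merged into one kernel-verified Lean document; each statement's English description precedes it below -/
import Mathlib

section
/- For all integers q ≥ 1 and 1 ≤ r ≤ m, q^r · Σ_{k=1}^{m} (1/(k+q)!) · ⟦k, r⟧ = 1/q! − (1/(m+q)!) · Σ_{j=1}^{r} q^{j−1} · ⟦m+1, j⟧, as an identity of rational numbers. -/
/-- The `r`-Stirling numbers of the first kind `⟦n,k⟧_r`: `⟦r,r⟧_r = 1`,
`⟦n,k⟧_r = 0` if `n < r` or `k < r`, and
`⟦n,k⟧_r = (n-1)·⟦n-1,k⟧_r + ⟦n-1,k-1⟧_r` for `n > r`. -/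
def rStirling1 (r : ℕ) : ℕ → ℕ → ℕ
  | 0, k => if r = 0 ∧ k = 0 then 1 else 0
  | (n+1), k =>
    if n + 1 < r ∨ k < r then 0
    else if n + 1 = r then (if k = r then 1 else 0)
    else if k = 0 then 0
    else n * rStirling1 r n k + rStirling1 r n (k - 1)

/-- The (unsigned) Stirling numbers of the first kind. -/
def stirling1 : ℕ → ℕ → ℕ := rStirling1 0

theorem stirling1_succ_succ (n k : ℕ) :
    stirling1 (n + 1) (k + 1) = n * stirling1 n (k + 1) + stirling1 n k := by
  simp [stirling1, rStirling1]

theorem stirling1_succ_zero (n : ℕ) : stirling1 (n + 1) 0 = 0 := by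
  simp [stirling1, rStirling1]

theorem stirling1_one (k : ℕ) : stirling1 1 (k + 1) = if k = 0 then 1 else 0 := by
  simp [stirling1, rStirling1]

theorem key_step (q m s : ℕ) :
    (∑ j ∈ Finset.range (s + 1), (q : ℚ) ^ j * stirling1 (m + 2) (j + 1))
      = (m + 1 + q) * (∑ j ∈ Finset.range (s + 1), (q : ℚ) ^ j * stirling1 (m + 1) (j + 1))
        - (q : ℚ) ^ (s + 1) * stirling1 (m + 1) (s + 1) := by
  induction s with
  | zero =>
    simp only [zero_add, Finset.sum_range_one]
    rw [show stirling1 (m + 2) 1 = _ from stirling1_succ_succ (m + 1) 0, stirling1_succ_zero]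
    push_cast
    ring
  | succ s ih =>
    rw [Finset.sum_range_succ, ih, Finset.sum_range_succ _ (s + 1)]
    rw [show stirling1 (m + 2) (s + 1 + 1) = _ from stirling1_succ_succ (m + 1) (s + 1)]
    push_cast
    ring

theorem main_aux (q m s : ℕ) :
    (q : ℚ) ^ (s + 1) * ∑ k ∈ Finset.Icc 1 m, (1 / (k + q).factorial : ℚ) * stirling1 k (s + 1) =
      1 / q.factorial - (1 / (m + q).factorial : ℚ) *
          ∑ j ∈ Finset.range (s + 1), (q : ℚ) ^ j * stirling1 (m + 1) (j + 1) := by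
  induction m with
  | zero => simp [stirling1_one]
  | succ m ih =>
    rw [Finset.sum_Icc_succ_top (by omega), mul_add, ih, key_step]
    have h : ((m + 1 + q).factorial : ℚ) = (m + 1 + q) * (m + q).factorial := by
      rw [show m + 1 + q = (m + q) + 1 by ring, Nat.factorial_succ]
      push_cast
      ring
    have h1 : ((m + q).factorial : ℚ) ≠ 0 := by exact_mod_cast Nat.factorial_ne_zero _
    have h2 : (m + 1 + q : ℚ) ≠ 0 := by positivity
    have h3 : (q.factorial : ℚ) ≠ 0 := by exact_mod_cast Nat.factorial_ne_zero _
    rw [h]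
    field_simp
    ring

theorem stmt13 (q r m : ℕ) (hq : 1 ≤ q) (hr : 1 ≤ r) (hrm : r ≤ m) :
    (q : ℚ) ^ r * ∑ k ∈ Finset.Icc 1 m, (1 / (k + q).factorial : ℚ) * stirling1 k r =
      1 / q.factorial -
        (1 / (m + q).factorial : ℚ) *
          ∑ j ∈ Finset.Icc 1 r, (q : ℚ) ^ (j - 1) * stirling1 (m + 1) j := by
  obtain ⟨s, rfl⟩ : ∃ s, r = s + 1 := ⟨r - 1, by omega⟩
  rw [main_aux]
  congr 2
  rw [← Finset.Ico_add_one_right_eq_Icc, Finset.sum_Ico_eq_sum_range]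
  simp [add_comm]
end

section
/- For all integers m, i, r with 0 ≤ i ≤ m and r ≥ 0, Σ_{k=0}^{m} (−1)^{m−k} · {m, k} · ⟦k+r+1, i+r+1⟧_{r+1} = C(m, i) · (r+1)^{m−i}, where {n,k} denotes the Stirling number of the second kind and C(a,b) is a binomial coefficient. -/
/-- The Stirling numbers of the second kind. -/
def stirling2 : ℕ → ℕ → ℕ
  | 0, k => if k = 0 then 1 else 0
  | (_+1), 0 => 0
  | (n+1), (k+1) => (k+1) * stirling2 n (k+1) + stirling2 n k

theorem stirling2_lt : ∀ n k : ℕ, n < k → stirling2 n k = 0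
  | 0, k, h => by simp [stirling2]; omega
  | n+1, 0, h => by omega
  | n+1, k+1, h => by
    simp [stirling2, stirling2_lt n (k+1) (by omega), stirling2_lt n k (by omega)]

theorem rS_lt (r n k : ℕ) (h : k < r) : rStirling1 r n k = 0 := by
  cases n with
  | zero => simp [rStirling1]; omega
  | succ n => simp [rStirling1, h]

theorem rS_zero (r i : ℕ) :
    rStirling1 (r+1) (0 + r + 1) (i + r + 1) = if i = 0 then 1 else 0 := by
  have h : ¬ (i + r + 1 < r + 1) := by omega
  simp [rStirling1]

theorem rS_succ (r k i : ℕ) :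
    rStirling1 (r+1) ((k + 1) + r + 1) (i + r + 1) =
      (k + r + 1) * rStirling1 (r+1) (k + r + 1) (i + r + 1)
        + rStirling1 (r+1) (k + r + 1) (i + r) := by
  rw [show (k + 1) + r + 1 = (k + r + 1) + 1 by omega, rStirling1]
  rw [if_neg (by omega), if_neg (by omega), if_neg (by omega)]
  simp

theorem trans_succ (m : ℕ) (a : ℕ → ℤ) :
    ∑ k ∈ Finset.range (m + 2), (-1 : ℤ) ^ (m + 1 + k) * stirling2 (m+1) k * a k =
    ∑ k ∈ Finset.range (m + 1), (-1 : ℤ) ^ (m + k) * stirling2 m k * (a (k+1) - k * a k) := by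
  have h1 : ∑ k ∈ Finset.range (m + 2), (-1 : ℤ) ^ (m + k) * stirling2 m k * (k * a k) =
      ∑ k ∈ Finset.range (m + 1), (-1 : ℤ) ^ (m + k) * stirling2 m k * (k * a k) := by
    rw [Finset.sum_range_succ, stirling2_lt m (m+1) (by omega)]
    simp
  rw [Finset.sum_range_succ'] at h1
  simp only [mul_sub, Finset.sum_sub_distrib]
  rw [← h1, Finset.sum_range_succ']
  simp only [stirling2, Nat.cast_zero, mul_zero, zero_mul, add_zero]
  rw [← Finset.sum_sub_distrib]
  refine Finset.sum_congr rfl fun k _ => ?_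
  push_cast
  ring

theorem main_aux_s15 (r : ℕ) : ∀ m i : ℕ,
    ∑ k ∈ Finset.range (m + 1),
        (-1 : ℤ) ^ (m + k) * stirling2 m k * rStirling1 (r + 1) (k + r + 1) (i + r + 1) =
      m.choose i * (r + 1 : ℤ) ^ (m - i) := by
  intro m
  induction m with
  | zero =>
    intro i
    have := rS_zero r i
    cases i <;> simp_all [stirling2]
  | succ m ih =>
    intro i
    rw [trans_succ m (fun k => (rStirling1 (r + 1) (k + r + 1) (i + r + 1) : ℤ))]
    have h : ∀ k : ℕ, ((rStirling1 (r + 1) (k + 1 + r + 1) (i + r + 1) : ℕ) : ℤ)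
        - k * rStirling1 (r + 1) (k + r + 1) (i + r + 1) =
        (r + 1) * rStirling1 (r + 1) (k + r + 1) (i + r + 1)
          + rStirling1 (r + 1) (k + r + 1) (i + r) := by
      intro k
      rw [rS_succ]; push_cast; ring
    simp only [h, mul_add, Finset.sum_add_distrib, mul_left_comm _ ((r : ℤ) + 1)]
    have h2 : ∀ k : ℕ, (-1 : ℤ) ^ (m + k) * stirling2 m k *
        ((r + 1) * rStirling1 (r + 1) (k + r + 1) (i + r + 1)) =
        (r + 1) * ((-1 : ℤ) ^ (m + k) * stirling2 m k *
          rStirling1 (r + 1) (k + r + 1) (i + r + 1)) := by intro k; ring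
    simp only [← Finset.mul_sum, ih i]
    cases i with
    | zero =>
      simp [rS_lt, pow_succ]
      ring
    | succ i =>
      have h3 := ih i
      rw [show i + 1 + r = i + r + 1 by omega, h3, Nat.choose_succ_succ]
      rcases Nat.lt_or_ge i m with h4 | h4
      · obtain ⟨d, rfl⟩ := Nat.exists_eq_add_of_lt h4
        rw [show i + d + 1 - (i + 1) = d by omega, show i + d + 1 - i = d + 1 by omega,
          show i + d + 1 + 1 - (i + 1) = d + 1 by omega]
        push_cast; ring
      · rw [Nat.choose_eq_zero_of_lt (show m < i + 1 by omega)]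
        simp

theorem stmt15 (m i r : ℕ) (h : i ≤ m) :
    ∑ k ∈ Finset.range (m + 1),
        (-1 : ℤ) ^ (m - k) * stirling2 m k * rStirling1 (r + 1) (k + r + 1) (i + r + 1) =
      m.choose i * (r + 1 : ℤ) ^ (m - i) := by
  rw [← main_aux_s15 r m i]
  refine Finset.sum_congr rfl fun k hk => ?_
  have hk' : k ≤ m := by simpa [Nat.lt_succ_iff] using hk
  obtain ⟨d, rfl⟩ := Nat.exists_eq_add_of_le hk'
  rw [show k + d - k = d by omega, show k + d + k = d + 2 * k by omega, pow_add, pow_mul]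
  simp
end
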